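/- arXiv:2102.11496 — 2 statements merged into one kernel-verified Lean document; each statement's English description precedes it below -/
import Mathlib

section
/- There exist ε > 0 and c_q < q such that for every δ > 0 the following holds for all sufficiently large n: for every set A ⊆ F_q^n with |A| > c_q^n and every admissible tuple a = (a,b,c), one has |A_a^ε| ≥ (1−δ)|A|. -/
theorem ACS_support {F X : Type*} [Field F] [Fintype F] [Fintype X] [DecidableEq F]
    (W : Submodule F (X → F)) :
    ∃ h ∈ W, Module.finrank F W ≤ Fintype.card {i // h i ≠ 0} := by
  classical
  obtain ⟨⟨h, hW⟩, hmax⟩ := Finite.exists_max (fun h : W => Fintype.card {i // h.1 i ≠ 0})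
  refine ⟨h, hW, ?_⟩
  by_contra hlt
  push Not at hlt
  let R : W →ₗ[F] ({i // h i ≠ 0} → F) :=
    (LinearMap.funLeft F F (Subtype.val : {i // h i ≠ 0} → X)).comp W.subtype
  have hk : LinearMap.ker R ≠ ⊥ := by
    apply LinearMap.ker_ne_bot_of_finrank_lt
    simpa using hlt
  obtain ⟨w, hwk, hw0⟩ := (Submodule.ne_bot_iff _).1 hk
  have hwz : ∀ i, h i ≠ 0 → w.1 i = 0 := by
    intro i hi
    have := congrFun (LinearMap.mem_ker.1 hwk) ⟨i, hi⟩
    simpa [R, LinearMap.funLeft] using this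
  have : ∃ j, w.1 j ≠ 0 := by
    by_contra hc
    push Not at hc
    exact hw0 (Subtype.ext (funext hc))
  obtain ⟨j, hj⟩ := this
  have h1 := hmax (⟨h, hW⟩ + w)
  simp only [Fintype.card_subtype] at h1
  have h2 : (Finset.univ.filter fun i => h i ≠ 0) ⊂
      (Finset.univ.filter fun i => ((⟨h, hW⟩ + w : W) : X → F) i ≠ 0) := by
    rw [Finset.ssubset_iff_of_subset]
    · refine ⟨j, ?_, ?_⟩
      · have : h j = 0 := by
          by_contra hc
          exact hj (hwz j hc)
        simp [this, hj]
      · simp only [Finset.mem_filter, Finset.mem_univ, true_and]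
        intro hc
        exact hj (hwz j hc)
    · intro i hi
      simp only [Finset.mem_filter, Finset.mem_univ, true_and] at hi ⊢
      simpa [hwz i hi] using hi
  exact absurd (Finset.card_lt_card h2) (not_lt.2 h1)

theorem ACS_slice {F X M : Type*} [Field F] [Fintype F] [Fintype X] [DecidableEq X] [Fintype M]
    (u : M → X → F) (g1 g2 g3 : M → X → X → F)
    (H : ∀ x y z, (if x = y ∧ y = z then (1 : F) else 0) =
      ∑ e, u e x * g1 e y z + ∑ e, u e y * g2 e x z + ∑ e, u e z * g3 e x y) :
    Fintype.card X ≤ 3 * Fintype.card M := by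
  classical
  let L : (X → F) →ₗ[F] (M → F) := Matrix.mulVecLin (Matrix.of u)
  obtain ⟨h, hW, hr⟩ := ACS_support (LinearMap.ker L)
  have h1 : Fintype.card X ≤ Module.finrank F (LinearMap.ker L) + Fintype.card M := by
    have := LinearMap.finrank_range_add_finrank_ker L
    have h2 := Submodule.finrank_le (LinearMap.range L)
    simp only [Module.finrank_fintype_fun_eq_card] at this h2
    omega
  have hz : ∀ e, ∑ x, u e x * h x = 0 := by
    intro e
    have := congrFun (LinearMap.mem_ker.1 hW) e
    simpa [L, Matrix.mulVec, dotProduct] using this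
  let A : Matrix X M F := Matrix.of fun y e => u e y
  let B : Matrix M X F := Matrix.of fun e z => ∑ x, h x * g2 e x z
  let C : Matrix X M F := Matrix.of fun y e => ∑ x, h x * g3 e x y
  let D : Matrix M X F := Matrix.of fun e z => u e z
  have key : Matrix.diagonal h = A * B + C * D := by
    ext y z
    have e1 : Matrix.diagonal h y z = ∑ x, h x * (if x = y ∧ y = z then (1 : F) else 0) := by
      by_cases hyz : y = z
      · subst hyz; simp
      · simp [hyz]
    rw [e1]
    simp only [H, mul_add, Finset.sum_add_distrib, Matrix.add_apply, Matrix.mul_apply, A, B, C, D,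
      Matrix.of_apply, Finset.mul_sum, Finset.sum_mul]
    have z1 : ∑ x, ∑ e, h x * (u e x * g1 e y z) = 0 := by
      rw [Finset.sum_comm]
      refine Finset.sum_eq_zero fun e _ => ?_
      have : ∑ x, h x * (u e x * g1 e y z) = (∑ x, u e x * h x) * g1 e y z := by
        rw [Finset.sum_mul]
        exact Finset.sum_congr rfl fun x _ => by ring
      rw [this, hz, zero_mul]
    rw [z1, zero_add]
    congr 1
    · rw [Finset.sum_comm]
      exact Finset.sum_congr rfl fun e _ => Finset.sum_congr rfl fun x _ => by ring
    · rw [Finset.sum_comm]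
      exact Finset.sum_congr rfl fun e _ => Finset.sum_congr rfl fun x _ => by ring
  have r1 := Matrix.rank_diagonal h
  have r2 := Matrix.rank_mul_le_left (Matrix.fromCols A C) (Matrix.fromRows B D)
  have r3 := Matrix.rank_le_card_width (Matrix.fromCols A C)
  rw [Fintype.card_sum] at r3
  rw [key, ← Matrix.fromCols_mul_fromRows] at r1
  omega

open MvPolynomial in
theorem ACS_coord {F : Type*} [Field F] (m : ℕ) (a b c : F) :
    ∃ (T : Finset (Fin 3 →₀ ℕ)) (k : (Fin 3 →₀ ℕ) → F),
      (∀ τ ∈ T, τ 0 + τ 1 + τ 2 ≤ m) ∧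
      ∀ x y z : F, 1 - (a * x + b * y + c * z) ^ m =
        ∑ τ ∈ T, k τ * (x ^ τ 0 * y ^ τ 1 * z ^ τ 2) := by
  classical
  let P : MvPolynomial (Fin 3) F := 1 - (C a * X 0 + C b * X 1 + C c * X 2) ^ m
  have hl : ∀ (a : F) (i : Fin 3), (C a * X i : MvPolynomial (Fin 3) F).totalDegree ≤ 1 := by
    intro a i
    refine (totalDegree_mul _ _).trans ?_
    simp
  have hd : P.totalDegree ≤ m := by
    refine (totalDegree_sub _ _).trans (max_le (by simp) ?_)
    refine (totalDegree_pow _ _).trans ?_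
    refine (Nat.mul_le_mul_left m (?_ : _ ≤ 1)).trans (by simp)
    refine (totalDegree_add _ _).trans (max_le ?_ (hl _ _))
    exact (totalDegree_add _ _).trans (max_le (hl _ _) (hl _ _))
  refine ⟨P.support, fun τ => P.coeff τ, ?_, ?_⟩
  · intro τ hτ
    have := (le_totalDegree hτ).trans hd
    rwa [Finsupp.sum_fintype _ _ (by simp), Fin.sum_univ_three] at this
  · intro x y z
    have h1 : eval ![x, y, z] P = 1 - (a * x + b * y + c * z) ^ m := by
      simp [P]
    rw [← h1, eval_eq']
    simp [Fin.prod_univ_three]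

/-- Low-degree exponent vectors. -/
def ACSM (n m : ℕ) : Finset (Fin n → ℕ) :=
  (Fintype.piFinset fun _ => Finset.range (m + 1)).filter fun e => 3 * ∑ i, e i ≤ n * m

theorem ACS_count (n m : ℕ) (s : ℝ) (h0 : 0 < s) (h1 : s ≤ 1) :
    ((ACSM n m).card : ℝ) * (s ^ m) ^ n ≤ (∑ i ∈ Finset.range (m + 1), s ^ (3 * i)) ^ n := by
  classical
  have : (∑ i ∈ Finset.range (m + 1), s ^ (3 * i)) ^ n =
      ∑ e ∈ Fintype.piFinset (fun _ : Fin n => Finset.range (m + 1)), s ^ (3 * ∑ i, e i) := by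
    have := Finset.prod_univ_sum (fun _ : Fin n => Finset.range (m + 1))
      (fun _ i => s ^ (3 * i))
    simp only [Finset.prod_const, Finset.card_univ, Fintype.card_fin] at this
    rw [this]
    refine Finset.sum_congr rfl fun e _ => ?_
    rw [Finset.prod_pow_eq_pow_sum, Finset.mul_sum]
  rw [this, ← nsmul_eq_mul, ← Finset.sum_const]
  refine (Finset.sum_le_sum (f := fun _ => (s ^ m) ^ n) (g := fun e => s ^ (3 * ∑ i, e i)) ?_).trans
    (Finset.sum_le_sum_of_subset_of_nonneg (Finset.filter_subset _ _) ?_)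
  · intro e he
    rw [← pow_mul]
    apply pow_le_pow_of_le_one h0.le h1
    rw [mul_comm m n]
    exact (Finset.mem_filter.1 he).2
  · intros; positivity

theorem ACS_cap {F : Type*} [Field F] [Fintype F] (n : ℕ) (S : Finset (Fin n → F)) (a b c : F)
    (habc : a + b + c = 0)
    (hS : ∀ x ∈ S, ∀ y ∈ S, ∀ z ∈ S, a • x + b • y + c • z = 0 → x = y ∧ y = z) :
    S.card ≤ 3 * (ACSM n (Fintype.card F - 1)).card := by
  classical
  set m := Fintype.card F - 1 with hm
  have hmpos : m ≠ 0 := by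
    have := Fintype.one_lt_card (α := F)
    omega
  obtain ⟨T, k, hT, hk⟩ := ACS_coord (F := F) m a b c
  let P : Finset (Fin n → Fin 3 →₀ ℕ) := Fintype.piFinset fun _ => T
  let ex : Fin 3 → (Fin n → Fin 3 →₀ ℕ) → (Fin n → ℕ) := fun j p i => p i j
  let mon : (Fin n → ℕ) → (Fin n → F) → F := fun e x => ∏ i, x i ^ e i
  let K : (Fin n → Fin 3 →₀ ℕ) → F := fun p => ∏ i, k (p i)
  have hex : ∀ p ∈ P, ∃ j, ex j p ∈ ACSM n m := by
    intro p hp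
    have hp' : ∀ i, p i 0 + p i 1 + p i 2 ≤ m := fun i => hT _ (Fintype.mem_piFinset.1 hp i)
    by_contra hc
    push Not at hc
    have hb : ∀ j, n * m < 3 * ∑ i, p i j := by
      intro j
      by_contra hle
      push Not at hle
      apply hc j
      refine Finset.mem_filter.2 ⟨Fintype.mem_piFinset.2 fun i => Finset.mem_range.2 ?_, hle⟩
      have := hp' i
      fin_cases j <;> simp [ex] <;> omega
    have hs : ∑ i, (p i 0 + p i 1 + p i 2) ≤ ∑ i : Fin n, m := Finset.sum_le_sum fun i _ => hp' i
    simp only [Finset.sum_add_distrib, Finset.sum_const, Finset.card_univ, Fintype.card_fin,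
      smul_eq_mul] at hs
    have := hb 0; have := hb 1; have := hb 2
    omega
  choose! κ hκ using hex
  have hprod : ∀ x y z : Fin n → F, ∏ i, (1 - (a * x i + b * y i + c * z i) ^ m) =
      ∑ p ∈ P, K p * (mon (ex 0 p) x * mon (ex 1 p) y * mon (ex 2 p) z) := by
    intro x y z
    simp only [hk]
    rw [Finset.prod_univ_sum]
    refine Finset.sum_congr rfl fun p _ => ?_
    simp only [Finset.prod_mul_distrib, K, mon, ex]
  have hind : ∀ x y z : Fin n → F, ∏ i, (1 - (a * x i + b * y i + c * z i) ^ m) =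
      if a • x + b • y + c • z = 0 then 1 else 0 := by
    intro x y z
    split_ifs with h
    · refine Finset.prod_eq_one fun i _ => ?_
      have := congrFun h i
      simp only [Pi.add_apply, Pi.smul_apply, smul_eq_mul, Pi.zero_apply] at this
      rw [this, zero_pow hmpos, sub_zero]
    · obtain ⟨i, hi⟩ := Function.ne_iff.1 h
      refine Finset.prod_eq_zero (Finset.mem_univ i) ?_
      simp only [Pi.add_apply, Pi.smul_apply, smul_eq_mul, Pi.zero_apply] at hi
      rw [FiniteField.pow_card_sub_one_eq_one _ hi, sub_self]
  have hsplit : ∀ f : (Fin n → Fin 3 →₀ ℕ) → F, ∑ p ∈ P, f p =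
      ∑ j, ∑ e : ACSM n m, ∑ p ∈ P.filter (fun p => κ p = j ∧ ex j p = e), f p := by
    intro f
    rw [← Finset.sum_fiberwise P κ f]
    refine Finset.sum_congr rfl fun j _ => ?_
    rw [← Finset.sum_fiberwise_of_maps_to (t := ACSM n m) (g := ex j)]
    · rw [← Finset.sum_coe_sort]
      refine Finset.sum_congr rfl fun e _ => ?_
      rw [Finset.filter_filter]
    · intro p hp
      obtain ⟨h1, h2⟩ := Finset.mem_filter.1 hp
      rw [← h2]; exact hκ p h1
  let G : Fin 3 → (Fin n → ℕ) → Finset (Fin n → Fin 3 →₀ ℕ) :=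
    fun j e => P.filter (fun p => κ p = j ∧ ex j p = e)
  have := ACS_slice (F := F) (X := S) (M := ACSM n m) (fun e x => mon e x)
    (fun e y z => ∑ p ∈ G 0 e, K p * (mon (ex 1 p) y * mon (ex 2 p) z))
    (fun e x z => ∑ p ∈ G 1 e, K p * (mon (ex 0 p) x * mon (ex 2 p) z))
    (fun e x y => ∑ p ∈ G 2 e, K p * (mon (ex 0 p) x * mon (ex 1 p) y)) ?_
  · simpa using this
  · intro x y z
    have hiff : (x = y ∧ y = z) ↔ a • x.1 + b • y.1 + c • z.1 = 0 := by
      constructor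
      · rintro ⟨rfl, rfl⟩
        rw [← add_smul, ← add_smul, habc, zero_smul]
      · intro h
        have := hS x x.2 y y.2 z z.2 h
        exact ⟨Subtype.ext this.1, Subtype.ext this.2⟩
    simp only [hiff]
    rw [← hind, hprod, hsplit, Fin.sum_univ_three]
    simp only [Finset.mul_sum]
    congr 1
    · congr 1
      · refine Finset.sum_congr rfl fun e _ => Finset.sum_congr rfl fun p hp => ?_
        rw [← (Finset.mem_filter.1 hp).2.2]; ring
      · refine Finset.sum_congr rfl fun e _ => Finset.sum_congr rfl fun p hp => ?_
        rw [← (Finset.mem_filter.1 hp).2.2]; ring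
    · refine Finset.sum_congr rfl fun e _ => Finset.sum_congr rfl fun p hp => ?_
      rw [← (Finset.mem_filter.1 hp).2.2]; ring

theorem ACS_gamma (m : ℕ) (hm : m ≠ 0) : ∃ s : ℝ, 0 < s ∧ s ≤ 1 ∧
    (∑ i ∈ Finset.range (m + 1), s ^ (3 * i)) < (m + 1) * s ^ m := by
  let G : ℝ → ℝ := fun s => (∑ i ∈ Finset.range (m + 1), s ^ (3 * i)) - (m + 1) * s ^ m
  have hd : HasDerivAt G ((∑ i ∈ Finset.range (m + 1), ((3 * i : ℕ) : ℝ) * 1 ^ (3 * i - 1)) -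
      (m + 1) * (m * 1 ^ (m - 1))) 1 := by
    refine HasDerivAt.sub ?_ ((hasDerivAt_pow m 1).const_mul _)
    exact HasDerivAt.fun_sum fun i _ => hasDerivAt_pow _ _
  have hsum : (∑ i ∈ Finset.range (m + 1), (i : ℝ)) = (m + 1) * m / 2 := by
    have := Finset.sum_range_id_mul_two (m + 1)
    have h2 : ((∑ i ∈ Finset.range (m + 1), i : ℕ) : ℝ) * 2 = (m + 1) * m := by
      exact_mod_cast this
    push_cast at h2
    linarith
  have hv : ((∑ i ∈ Finset.range (m + 1), ((3 * i : ℕ) : ℝ) * 1 ^ (3 * i - 1)) -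
      (m + 1) * (m * 1 ^ (m - 1))) = ((m : ℝ) + 1) * m / 2 := by
    simp only [one_pow, mul_one, Nat.cast_mul, ← Finset.mul_sum, hsum]
    push_cast; ring
  rw [hv] at hd
  have hG1 : G 1 = 0 := by simp [G]
  have hpos : 0 < ((m : ℝ) + 1) * m / 2 := by
    have : (0 : ℝ) < m := by exact_mod_cast Nat.pos_of_ne_zero hm
    positivity
  have hsl := hasDerivAt_iff_tendsto_slope.1 hd
  have hev := hsl.eventually (lt_mem_nhds hpos)
  have hev2 : ∀ᶠ s in nhdsWithin (1 : ℝ) (Set.Iio 1), 0 < slope G 1 s :=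
    hev.filter_mono (nhdsWithin_mono _ fun x hx => ne_of_lt hx)
  have hev3 : ∀ᶠ s in nhdsWithin (1 : ℝ) (Set.Iio 1), 0 < s :=
    (lt_mem_nhds one_pos).filter_mono nhdsWithin_le_nhds
  obtain ⟨s, ⟨h1, h2⟩, h3⟩ := ((hev2.and hev3).and self_mem_nhdsWithin).exists
  have h3' : s < 1 := h3
  refine ⟨s, h2, h3'.le, ?_⟩
  rw [slope_def_field, hG1, sub_zero] at h1
  have : G s < 0 := by
    by_contra hc
    exact absurd h1 (not_lt.2 (div_nonpos_of_nonneg_of_nonpos (not_lt.1 hc) (by linarith)))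
  simpa [G, sub_neg] using this

theorem ACS_indep {V : Type*} [DecidableEq V] (N : V → Finset V) (d : ℝ) (B : Finset V) 
    (hN : ∀ x ∈ B, ((N x).card : ℝ) ≤ d) :
    ∃ S ⊆ B, (∀ x ∈ S, ∀ y ∈ S, y ∈ N x → x = y) ∧ (B.card : ℝ) ≤ (2 * d + 1) * S.card := by
  induction B using Finset.strongInduction with
  | H B ih =>
  rcases B.eq_empty_or_nonempty with rfl | hne
  · exact ⟨∅, by simp, by simp, by simp⟩
  have hv : ∃ v ∈ B, ((B.filter fun x => v ∈ N x).card : ℝ) ≤ d := by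
    by_contra hc
    push Not at hc
    have h1 := Finset.sum_lt_sum_of_nonempty hne hc
    have h2 := Finset.sum_le_sum hN
    have h3 : ∑ v ∈ B, (B.filter fun x => v ∈ N x).card ≤ ∑ x ∈ B, (N x).card := by
      have := Finset.sum_card_bipartiteAbove_eq_sum_card_bipartiteBelow (s := B) (t := B)
        (fun v x => v ∈ N x)
      simp only [Finset.bipartiteAbove, Finset.bipartiteBelow] at this
      rw [this]
      refine Finset.sum_le_sum fun x _ => Finset.card_le_card fun y hy => (Finset.mem_filter.1 hy).2
    have h3' : ∑ v ∈ B, ((B.filter fun x => v ∈ N x).card : ℝ) ≤ ∑ x ∈ B, ((N x).card : ℝ) := by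
      exact_mod_cast h3
    linarith
  obtain ⟨v, hvB, hvd⟩ := hv
  let D := insert v (N v ∪ B.filter fun x => v ∈ N x)
  have hD : (D.card : ℝ) ≤ 2 * d + 1 := by
    have h1 : D.card ≤ (N v).card + (B.filter fun x => v ∈ N x).card + 1 :=
      (Finset.card_insert_le _ _).trans (Nat.add_le_add_right (Finset.card_union_le _ _) 1)
    have h1' : (D.card : ℝ) ≤ (N v).card + (B.filter fun x => v ∈ N x).card + 1 := by
      exact_mod_cast h1
    have := hN v hvB
    linarith
  have hvD : v ∈ D := Finset.mem_insert_self _ _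
  have hss : B \ D ⊂ B := by
    rw [Finset.ssubset_iff_of_subset Finset.sdiff_subset]
    exact ⟨v, hvB, by simp [hvD]⟩
  obtain ⟨S, hSB, hS, hc⟩ := ih (B \ D) hss fun x hx => hN x (Finset.mem_sdiff.1 hx).1
  have hvS : v ∉ S := fun h => (Finset.mem_sdiff.1 (hSB h)).2 hvD
  refine ⟨insert v S, ?_, ?_, ?_⟩
  · exact Finset.insert_subset hvB (hSB.trans Finset.sdiff_subset)
  · intro x hx y hy hxy
    rcases Finset.mem_insert.1 hx with rfl | hx'
    · rcases Finset.mem_insert.1 hy with rfl | hy'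
      · rfl
      · exact absurd (by simp [D, hxy]) (Finset.mem_sdiff.1 (hSB hy')).2
    · rcases Finset.mem_insert.1 hy with rfl | hy'
      · have := Finset.mem_sdiff.1 (hSB hx')
        exact absurd (by simp [D, hxy, this.1]) this.2
      · exact hS x hx' y hy' hxy
  · rw [Finset.card_insert_of_notMem hvS]
    have h1 : B.card ≤ (B \ D).card + D.card := by
      have := Finset.le_card_sdiff D B
      omega
    have h1' : (B.card : ℝ) ≤ (B \ D).card + D.card := by exact_mod_cast h1
    push_cast
    linarith

/-- **Theorem (almost cap sets are large in density).**
There exist `ε > 0` and `c_q < q` such that for every `δ > 0` and all sufficiently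
large `n`: for every `A ⊆ F_q^n` with `|A| > c_q^n` and every admissible tuple
`(a, b, c)` (i.e. `a, b, c ≠ 0` and `a + b + c = 0`), the set
`A_a^ε = {x ∈ A | ∃ at least |A|^ε pairs (y,z) ∈ A² with ax + by + cz = 0}`
satisfies `|A_a^ε| ≥ (1 - δ)|A|`. -/
theorem almost_cap_set_density {F : Type*} [Field F] [Fintype F] :
    ∃ ε : ℝ, 0 < ε ∧ ∃ cq : ℝ, cq < (Fintype.card F : ℝ) ∧
      ∀ δ : ℝ, 0 < δ → ∃ N : ℕ, ∀ n : ℕ, N ≤ n →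
        ∀ A : Set (Fin n → F), cq ^ n < (A.ncard : ℝ) →
        ∀ a b c : F, a ≠ 0 → b ≠ 0 → c ≠ 0 → a + b + c = 0 →
          (1 - δ) * (A.ncard : ℝ) ≤
            (({x ∈ A | ((A.ncard : ℝ)) ^ ε ≤
              (({p : (Fin n → F) × (Fin n → F) | p.1 ∈ A ∧ p.2 ∈ A ∧
                a • x + b • p.1 + c • p.2 = 0}).ncard : ℝ)}).ncard : ℝ) := by
  classical
  set q := Fintype.card F with hq
  have hq1 : 1 < q := Fintype.one_lt_card
  obtain ⟨s, hs0, hs1, hs⟩ := ACS_gamma (q - 1) (by omega)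
  have hqc : (((q - 1 : ℕ) : ℝ) + 1) = q := by
    rw [Nat.cast_sub hq1.le]; simp
  rw [hqc] at hs
  set Q : ℝ := ∑ i ∈ Finset.range (q - 1 + 1), s ^ (3 * i) with hQ
  have hQ0 : 0 < Q := Finset.sum_pos (fun i _ => by positivity) (by simp)
  have hsm : 0 < s ^ (q - 1) := by positivity
  set γ : ℝ := Q / s ^ (q - 1) with hγ
  have hγ0 : 0 < γ := by positivity
  have hγq : γ < q := by rwa [hγ, div_lt_iff₀ hsm]
  have hcount : ∀ n, ((ACSM n (q - 1)).card : ℝ) ≤ γ ^ n := by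
    intro n
    rw [hγ, div_pow, le_div_iff₀ (by positivity)]
    exact ACS_count n (q - 1) s hs0 hs1
  set cq : ℝ := (γ + q) / 2 with hcq
  have hγc : γ < cq := by rw [hcq]; linarith
  have hcq' : cq < q := by rw [hcq]; linarith
  have hq0 : (0 : ℝ) < q := by exact_mod_cast (by omega : 0 < q)
  have hc0 : 0 < cq := hγ0.trans hγc
  have heps : ∃ ε : ℝ, 0 < ε ∧ (q : ℝ) ^ ε * γ < cq := by
    have hcont : ContinuousAt (fun ε : ℝ => (q : ℝ) ^ ε * γ) 0 :=
      (Real.continuousAt_const_rpow hq0.ne').mul continuousAt_const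
    have h1 : ∀ᶠ ε in nhds (0 : ℝ), (q : ℝ) ^ ε * γ < cq :=
      hcont.eventually (gt_mem_nhds (by simpa using hγc))
    have h2 : ∀ᶠ ε in nhdsWithin (0 : ℝ) (Set.Ioi 0), (q : ℝ) ^ ε * γ < cq :=
      h1.filter_mono nhdsWithin_le_nhds
    obtain ⟨ε, h3, h4⟩ := (h2.and self_mem_nhdsWithin).exists
    exact ⟨ε, h4, h3⟩
  obtain ⟨ε, hε, hεc⟩ := heps
  refine ⟨ε, hε, cq, hcq', fun δ hδ => ?_⟩
  set ρ : ℝ := (q : ℝ) ^ ε * γ / cq with hρ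
  have hρ0 : 0 ≤ ρ := by positivity
  have hρ1 : ρ < 1 := by rwa [hρ, div_lt_one hc0]
  have hlim : Filter.Tendsto (fun n : ℕ => 9 * ρ ^ n) Filter.atTop (nhds 0) := by
    simpa using (tendsto_pow_atTop_nhds_zero_of_lt_one hρ0 hρ1).const_mul 9
  obtain ⟨N, hN⟩ := Filter.eventually_atTop.1 (hlim.eventually (gt_mem_nhds hδ))
  refine ⟨N, fun n hn A hA a b c ha hb hc habc => ?_⟩
  by_contra hcon
  push Not at hcon
  set E : Set (Fin n → F) := {x ∈ A | ((A.ncard : ℝ)) ^ ε ≤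
              (({p : (Fin n → F) × (Fin n → F) | p.1 ∈ A ∧ p.2 ∈ A ∧
                a • x + b • p.1 + c • p.2 = 0}).ncard : ℝ)} with hE
  have hEA : E ⊆ A := fun x hx => hx.1
  have hcard : (A \ E).ncard + E.ncard = A.ncard :=
    Set.ncard_sdiff_add_ncard_of_subset hEA
  have hcard' : ((A \ E).ncard : ℝ) + E.ncard = A.ncard := by exact_mod_cast hcard
  let B : Finset (Fin n → F) := (A \ E).toFinset
  have hB : (B.card : ℝ) = (A \ E).ncard := by rw [Set.ncard_eq_toFinset_card']
  have hBδ : δ * (A.ncard : ℝ) < B.card := by rw [hB]; linarith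
  have hApos : (0 : ℝ) < A.ncard := (by positivity : (0 : ℝ) < cq ^ n).trans hA
  have hA1 : (1 : ℝ) ≤ A.ncard := by
    have : 0 < A.ncard := by exact_mod_cast hApos
    exact_mod_cast this
  let Nb : (Fin n → F) → Finset (Fin n → F) := fun x =>
    B.filter fun y => ∃ z ∈ B, a • x + b • y + c • z = 0
  have hNb : ∀ x ∈ B, ((Nb x).card : ℝ) ≤ (A.ncard : ℝ) ^ ε := by
    intro x hx
    have hx' : x ∈ A ∧ x ∉ E := by simpa [B] using hx
    have hlt : (({p : (Fin n → F) × (Fin n → F) | p.1 ∈ A ∧ p.2 ∈ A ∧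
                a • x + b • p.1 + c • p.2 = 0}).ncard : ℝ) < (A.ncard : ℝ) ^ ε := by
      by_contra hge
      exact hx'.2 ⟨hx'.1, not_lt.1 hge⟩
    refine le_trans ?_ hlt.le
    have hsub : ((Nb x : Finset (Fin n → F)) : Set (Fin n → F)) ⊆
        Prod.fst '' {p : (Fin n → F) × (Fin n → F) | p.1 ∈ A ∧ p.2 ∈ A ∧
                a • x + b • p.1 + c • p.2 = 0} := by
      intro y hy
      obtain ⟨hyB, z, hzB, hz⟩ := Finset.mem_filter.1 (Finset.mem_coe.1 hy)
      have hyA : y ∈ A ∧ y ∉ E := by simpa [B] using hyB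
      have hzA : z ∈ A ∧ z ∉ E := by simpa [B] using hzB
      exact ⟨(y, z), ⟨hyA.1, hzA.1, hz⟩, rfl⟩
    have h1 := Set.ncard_le_ncard hsub (Set.toFinite _)
    rw [Set.ncard_coe_finset] at h1
    exact_mod_cast h1.trans (Set.ncard_image_le (Set.toFinite _))
  obtain ⟨S, hSB, hSi, hSc⟩ := ACS_indep Nb _ B hNb
  have hScap := ACS_cap n S a b c habc (by
    intro x hx y hy z hz h
    have hxy : x = y := hSi x hx y hy (Finset.mem_filter.2 ⟨hSB hy, z, hSB hz, h⟩)
    refine ⟨hxy, ?_⟩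
    subst hxy
    have hab : a + b = -c := by linear_combination habc
    rw [← add_smul, hab, neg_smul, neg_add_eq_zero] at h
    exact smul_right_injective _ hc h)
  have hScap' : (S.card : ℝ) ≤ 3 * γ ^ n := by
    have h1 : (S.card : ℝ) ≤ 3 * (ACSM n (q - 1)).card := by exact_mod_cast hScap
    linarith [hcount n]
  have hpow1 : 1 ≤ (A.ncard : ℝ) ^ ε := Real.one_le_rpow hA1 hε.le
  have hAq : (A.ncard : ℝ) ≤ (q : ℝ) ^ n := by
    have h1 : A.ncard ≤ q ^ n := by
      have := Set.ncard_le_card A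
      simpa [Nat.card_eq_fintype_card] using this
    exact_mod_cast h1
  have hpow2 : (A.ncard : ℝ) ^ ε ≤ ((q : ℝ) ^ ε) ^ n := by
    refine (Real.rpow_le_rpow hApos.le hAq hε.le).trans (le_of_eq ?_)
    rw [← Real.rpow_natCast, ← Real.rpow_natCast, ← Real.rpow_mul hq0.le, ← Real.rpow_mul hq0.le,
      mul_comm]
  have hfin : (B.card : ℝ) ≤ 9 * ((q : ℝ) ^ ε * γ) ^ n := by
    calc (B.card : ℝ) ≤ (2 * (A.ncard : ℝ) ^ ε + 1) * S.card := hSc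
      _ ≤ (3 * ((q : ℝ) ^ ε) ^ n) * (3 * γ ^ n) := by
        apply mul_le_mul (by linarith) hScap' (by positivity) (by positivity)
      _ = 9 * ((q : ℝ) ^ ε * γ) ^ n := by rw [mul_pow]; ring
  have hρn : 9 * ρ ^ n < δ := hN n hn
  have h9 : 9 * ((q : ℝ) ^ ε * γ) ^ n < δ * cq ^ n := by
    have : ((q : ℝ) ^ ε * γ) ^ n = ρ ^ n * cq ^ n := by
      rw [← mul_pow, hρ, div_mul_cancel₀ _ hc0.ne']
    rw [this, ← mul_assoc]
    exact mul_lt_mul_of_pos_right hρn (by positivity)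
  have : δ * cq ^ n < δ * A.ncard := mul_lt_mul_of_pos_left hA hδ
  linarith
end

section
/- There exist ε > 0 and c_q < q such that for every δ > 0 the following holds for all sufficiently large n: every set A ⊆ F_q^n that is an (ε,δ)-cap set for some admissible tuple (a,b,c) satisfies |A| ≤ c_q^n. -/
section
open Finset

theorem rank_add_aux {F : Type*} [Field F] {S : Type*} [Fintype S]
    (A B : Matrix S S F) : (A + B).rank ≤ A.rank + B.rank := by
  unfold Matrix.rank
  refine le_trans (Submodule.finrank_mono ?_)
    (Submodule.finrank_add_le_finrank_add_finrank (LinearMap.range A.mulVecLin) (LinearMap.range B.mulVecLin))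
  rintro _ ⟨x, rfl⟩
  rw [Matrix.mulVecLin_add]
  exact Submodule.add_mem_sup ⟨x, rfl⟩ ⟨x, rfl⟩

theorem supp_lemma {F : Type*} [Field F] {S M : Type*} [Fintype S] [Fintype M] [DecidableEq F]
    (L : (S → F) →ₗ[F] (M → F)) :
    ∃ h : S → F, L h = 0 ∧ Fintype.card S ≤ Fintype.card M + (univ.filter fun x => h x ≠ 0).card := by
  classical
  let P : ℕ → Prop := fun k => ∃ h : S → F, L h = 0 ∧ (univ.filter fun x => h x ≠ 0).card = k
  have hP0 : P 0 := ⟨0, by simp, by simp⟩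
  have hPb : ∀ k, P k → k ≤ Fintype.card S := by
    rintro k ⟨h, -, rfl⟩
    exact card_le_univ _
  obtain ⟨h, hL, hk⟩ := Nat.findGreatest_spec (P := P) (Nat.zero_le (Fintype.card S)) hP0
  refine ⟨h, hL, ?_⟩
  by_contra! hlt
  let R : (S → F) →ₗ[F] ((M → F) × ({x // h x ≠ 0} → F)) :=
    L.prod (LinearMap.funLeft F F (Subtype.val))
  have hker : LinearMap.ker R ≠ ⊥ := by
    apply LinearMap.ker_ne_bot_of_finrank_lt
    simp only [Module.finrank_prod, Module.finrank_fintype_fun_eq_card]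
    rwa [Fintype.card_subtype]
  obtain ⟨g, hg, hg0⟩ := Submodule.exists_mem_ne_zero_of_ne_bot hker
  have hg' : R g = 0 := hg
  have h1 : L g = 0 := congrArg Prod.fst hg'
  have h2 : ∀ x, h x ≠ 0 → g x = 0 := fun x hx => congrFun (congrArg Prod.snd hg') ⟨x, hx⟩
  obtain ⟨x0, hx0⟩ := Function.ne_iff.mp hg0
  have hlt2 : (univ.filter fun x => h x ≠ 0).card < (univ.filter fun x => (h + g) x ≠ 0).card := by
    apply card_lt_card
    rw [Finset.ssubset_iff_of_subset]
    · refine ⟨x0, ?_, ?_⟩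
      · have : h x0 = 0 := by
          by_contra hh
          exact hx0 (h2 _ hh)
        simpa [this] using hx0
      · simp only [mem_filter, mem_univ, true_and]
        intro hh
        exact hx0 (h2 _ hh)
    · intro x hx
      simp only [mem_filter, mem_univ, true_and] at hx ⊢
      simpa [h2 x hx] using hx
  have hPn : P ((univ.filter fun x => (h + g) x ≠ 0).card) := ⟨h + g, by simp [hL, h1], rfl⟩
  have := Nat.le_findGreatest (hPb _ hPn) hPn
  omega

theorem rank_lemma {F : Type*} [Field F] {S E Φ : Type*} [Fintype S] [Fintype Φ] [DecidableEq E]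
    (M : Finset E) (m : E → S → F) (P : Finset Φ) (v : Φ → E) (hv : ∀ φ ∈ P, v φ ∈ M) (G : Φ → S → F) :
    (Matrix.of fun y z => ∑ φ ∈ P, m (v φ) y * G φ z : Matrix S S F).rank ≤ M.card := by
  classical
  have : (Matrix.of fun y z => ∑ φ ∈ P, m (v φ) y * G φ z : Matrix S S F) =
      (Matrix.of fun y (e : M) => m e y : Matrix S M F) *
      (Matrix.of fun (e : M) z => ∑ φ ∈ P with v φ = e, G φ z : Matrix M S F) := by
    ext y z
    simp only [Matrix.mul_apply, Matrix.of_apply]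
    rw [← Finset.sum_fiberwise_of_maps_to hv, ← Finset.sum_coe_sort M]
    refine Finset.sum_congr rfl fun e _ => ?_
    rw [Finset.mul_sum]
    refine Finset.sum_congr rfl fun φ hφ => ?_
    rw [(mem_filter.mp hφ).2]
  rw [this]
  refine (Matrix.rank_mul_le_left _ _).trans ((Matrix.rank_le_card_width _).trans ?_)
  simp

theorem slice_lemma {F : Type*} [Field F] {S E Φ : Type*} [Fintype S] [DecidableEq S] [Fintype Φ]
    [DecidableEq E] (M : Finset E) (m : E → S → F) (C : Φ → F) (u v w : Φ → E)
    (huvw : ∀ φ, u φ ∈ M ∨ v φ ∈ M ∨ w φ ∈ M)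
    (hT : ∀ x y z, ∑ φ, C φ * (m (u φ) x * m (v φ) y * m (w φ) z) = if x = y ∧ y = z then 1 else 0) :
    Fintype.card S ≤ 3 * M.card := by
  classical
  let L : (S → F) →ₗ[F] (M → F) := LinearMap.pi fun e => ∑ x, (m e x) • LinearMap.proj x
  obtain ⟨h, hL, hc⟩ := supp_lemma L
  have hL' : ∀ e ∈ M, ∑ x, h x * m e x = 0 := by
    intro e he
    have := congrFun hL ⟨e, he⟩
    simpa [L, mul_comm] using this
  let X : Φ → F := fun φ => ∑ x, h x * m (u φ) x
  have hX : ∀ φ, u φ ∈ M → X φ = 0 := fun φ hφ => hL' _ hφ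
  have key : (Matrix.diagonal h : Matrix S S F) =
      (Matrix.of fun y z => ∑ φ ∈ univ.filter (fun φ => v φ ∈ M),
        m (v φ) y * (C φ * X φ * m (w φ) z)) +
      (Matrix.of fun z y => ∑ φ ∈ univ.filter (fun φ => v φ ∉ M ∧ w φ ∈ M),
        m (w φ) z * (C φ * X φ * m (v φ) y)).transpose := by
    ext y z
    have e1 : (Matrix.diagonal h : Matrix S S F) y z =
        ∑ x, h x * (if x = y ∧ y = z then 1 else 0) := by
      rw [Matrix.diagonal_apply]
      by_cases hyz : y = z <;> simp [hyz]
    rw [e1]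
    simp_rw [← hT, Finset.mul_sum]
    rw [Finset.sum_comm]
    have e2 : ∀ φ, ∑ x, h x * (C φ * (m (u φ) x * m (v φ) y * m (w φ) z)) =
        m (v φ) y * (C φ * X φ * m (w φ) z) := by
      intro φ
      simp only [X, Finset.mul_sum, Finset.sum_mul]
      exact Finset.sum_congr rfl fun x _ => by ring
    simp_rw [e2]
    simp only [Matrix.add_apply, Matrix.of_apply, Matrix.transpose_apply]
    rw [Finset.sum_filter, Finset.sum_filter, ← Finset.sum_add_distrib]
    refine Finset.sum_congr rfl fun φ _ => ?_
    by_cases h1 : v φ ∈ M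
    · simp [h1]
    · by_cases h2 : w φ ∈ M
      · simp [h1, h2]; ring
      · have h3 : u φ ∈ M := by
          rcases huvw φ with h | h | h
          · exact h
          · exact absurd h h1
          · exact absurd h h2
        simp [h1, h2, hX φ h3]
  have hr := Matrix.rank_diagonal h
  rw [key] at hr
  have r1 := rank_add_aux (Matrix.of fun y z => ∑ φ ∈ univ.filter (fun φ => v φ ∈ M),
        m (v φ) y * (C φ * X φ * m (w φ) z)) (Matrix.of fun z y => ∑ φ ∈ univ.filter (fun φ => v φ ∉ M ∧ w φ ∈ M),
        m (w φ) z * (C φ * X φ * m (v φ) y)).transpose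
  rw [Matrix.rank_transpose] at r1
  have r2 := rank_lemma M m (univ.filter (fun φ => v φ ∈ M)) v (by simp) (fun φ z => C φ * X φ * m (w φ) z)
  have r3 := rank_lemma M m (univ.filter (fun φ => v φ ∉ M ∧ w φ ∈ M)) w (by simp) (fun φ y => C φ * X φ * m (v φ) y)
  rw [Fintype.card_subtype] at hr
  rw [Fintype.card_coe] at hc
  omega

def GoodExp {F : Type*} [Field F] (D : ℕ) (f : F → F → F → F) : Prop :=
  ∃ (k : ℕ) (C : Fin k → F) (u v w : Fin k → ℕ), (∀ i, u i + v i + w i ≤ D) ∧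
    ∀ x y z, f x y z = ∑ i, C i * (x ^ u i * y ^ v i * z ^ w i)

theorem GoodExp.of_fintype {F : Type*} [Field F] {D : ℕ} {f : F → F → F → F} {ι : Type*} [Fintype ι]
    (C : ι → F) (u v w : ι → ℕ) (h : ∀ i, u i + v i + w i ≤ D)
    (hf : ∀ x y z, f x y z = ∑ i, C i * (x ^ u i * y ^ v i * z ^ w i)) : GoodExp D f := by
  let e := (Fintype.equivFin ι).symm
  refine ⟨Fintype.card ι, C ∘ e, u ∘ e, v ∘ e, w ∘ e, fun i => h _, fun x y z => ?_⟩
  rw [hf]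
  exact (Equiv.sum_comp e (fun i => C i * (x ^ u i * y ^ v i * z ^ w i))).symm

theorem GoodExp.mul {F : Type*} [Field F] {D D' : ℕ} {f g : F → F → F → F}
    (hf : GoodExp D f) (hg : GoodExp D' g) : GoodExp (D + D') (fun x y z => f x y z * g x y z) := by
  obtain ⟨k, C, u, v, w, h, hf⟩ := hf
  obtain ⟨k', C', u', v', w', h', hg⟩ := hg
  refine GoodExp.of_fintype (ι := Fin k × Fin k') (fun i => C i.1 * C' i.2) (fun i => u i.1 + u' i.2)
    (fun i => v i.1 + v' i.2) (fun i => w i.1 + w' i.2) (fun i => ?_) fun x y z => ?_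
  · have := h i.1
    have := h' i.2
    omega
  · rw [hf, hg, Fintype.sum_mul_sum, Fintype.sum_prod_type]
    refine Finset.sum_congr rfl fun i _ => Finset.sum_congr rfl fun j _ => ?_
    ring

theorem GoodExp.pow {F : Type*} [Field F] {f : F → F → F → F}
    (hf : GoodExp 1 f) (D : ℕ) : GoodExp D (fun x y z => f x y z ^ D) := by
  induction D with
  | zero => exact ⟨1, fun _ => 1, fun _ => 0, fun _ => 0, fun _ => 0, by simp, by simp⟩
  | succ D ih => simpa only [pow_succ] using ih.mul hf

theorem goodExp_main {F : Type*} [Field F] (a b c : F) (D : ℕ) :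
    GoodExp D (fun x y z => 1 - (a * x + b * y + c * z) ^ D) := by
  have h1 : GoodExp 1 (fun x y z => a * x + b * y + c * z) :=
    ⟨3, ![a, b, c], ![1, 0, 0], ![0, 1, 0], ![0, 0, 1], by intro i; fin_cases i <;> simp,
      by intro x y z; simp [Fin.sum_univ_three]⟩
  obtain ⟨k, C, u, v, w, h, hf⟩ := h1.pow D
  refine GoodExp.of_fintype (ι := Option (Fin k)) (fun i => i.elim 1 (fun i => - C i))
    (fun i => i.elim 0 u) (fun i => i.elim 0 v) (fun i => i.elim 0 w) (fun i => ?_) fun x y z => ?_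
  · cases i <;> simp [h]
  · have hf' := hf x y z
    simp only at hf'
    rw [hf']
    simp [Fintype.sum_option, sub_eq_add_neg]

theorem indicator {F : Type*} [Field F] [Fintype F] {n : ℕ} (t : Fin n → F) [Decidable (t = 0)] :
    ∏ i, (1 - t i ^ (Fintype.card F - 1)) = if t = 0 then 1 else 0 := by
  have hq : Fintype.card F - 1 ≠ 0 := by
    have := Fintype.one_lt_card (α := F)
    omega
  split_ifs with h
  · subst h
    simp [hq]
  · obtain ⟨i, hi⟩ := Function.ne_iff.mp h
    refine Finset.prod_eq_zero (mem_univ i) ?_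
    rw [FiniteField.pow_card_sub_one_eq_one _ hi, sub_self]

def lowExp (q n : ℕ) : Finset (Fin n → Fin q) :=
  univ.filter fun e => 3 * ∑ i, (e i : ℕ) ≤ (q - 1) * n

theorem cap_bound {F : Type*} [Field F] [Fintype F] {n : ℕ} (a b c : F)
    (S : Finset (Fin n → F))
    (hS : ∀ x ∈ S, ∀ y ∈ S, ∀ z ∈ S, (a • x + b • y + c • z = 0 ↔ x = y ∧ y = z)) :
    S.card ≤ 3 * (lowExp (Fintype.card F) n).card := by
  classical
  obtain ⟨k, C, u, v, w, h, hf⟩ := goodExp_main a b c (Fintype.card F - 1)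
  have hq := Fintype.one_lt_card (α := F)
  rw [← Fintype.card_coe S]
  refine slice_lemma (S := S) (Φ := Fin n → Fin k) (lowExp (Fintype.card F) n)
    (fun e x => ∏ i, x.1 i ^ (e i : ℕ)) (fun φ => ∏ i, C (φ i))
    (fun φ i => ⟨u (φ i), by have := h (φ i); omega⟩)
    (fun φ i => ⟨v (φ i), by have := h (φ i); omega⟩)
    (fun φ i => ⟨w (φ i), by have := h (φ i); omega⟩) (fun φ => ?_) fun x y z => ?_
  · simp only [lowExp, mem_filter, mem_univ, true_and]
    have : ∑ i, u (φ i) + ∑ i, v (φ i) + ∑ i, w (φ i) ≤ (Fintype.card F - 1) * n := by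
      rw [← Finset.sum_add_distrib, ← Finset.sum_add_distrib]
      refine (Finset.sum_le_sum fun i _ => h (φ i)).trans ?_
      simp [mul_comm]
    omega
  · have e := indicator (a • x.1 + b • y.1 + c • z.1)
    simp only [Pi.add_apply, Pi.smul_apply, smul_eq_mul, hf] at e
    rw [Fintype.prod_sum] at e
    simp only [Finset.prod_mul_distrib] at e
    rw [e]
    have := hS x x.2 y y.2 z z.2
    simp only [this, Subtype.ext_iff]

theorem lowExp_card (q n : ℕ) (s : ℝ) (hs0 : 0 < s) (hs1 : s ≤ 1) :
    ((lowExp q n).card : ℝ) ≤ ((∑ j : Fin q, s ^ (3 * (j : ℕ))) / s ^ (q - 1)) ^ n := by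
  rw [div_pow, le_div_iff₀ (by positivity), ← pow_mul, ← nsmul_eq_mul]
  calc (lowExp q n).card • s ^ ((q - 1) * n)
      ≤ ∑ e ∈ lowExp q n, ∏ i, s ^ (3 * (e i : ℕ)) := by
        apply Finset.card_nsmul_le_sum
        intro e he
        rw [Finset.prod_pow_eq_pow_sum, ← Finset.mul_sum]
        exact pow_le_pow_of_le_one hs0.le hs1 (mem_filter.mp he).2
    _ ≤ ∑ e : Fin n → Fin q, ∏ i, s ^ (3 * (e i : ℕ)) :=
        Finset.sum_le_sum_of_subset_of_nonneg (subset_univ _) fun e _ _ => by positivity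
    _ = _ := by
        rw [← Fintype.prod_sum (fun (_ : Fin n) (j : Fin q) => s ^ (3 * (j : ℕ)))]
        simp

theorem exists_s (q : ℕ) (hq : 2 ≤ q) : ∃ s : ℝ, 0 < s ∧ s ≤ 1 ∧
    ∑ j : Fin q, s ^ (3 * (j : ℕ)) < q * s ^ (q - 1) := by
  let g : ℝ → ℝ := fun s => q * s ^ (q - 1) - ∑ j ∈ range q, s ^ (3 * j)
  have hg1 : g 1 = 0 := by simp [g]
  have hd : HasDerivAt g (-((q : ℝ) * (q - 1) / 2)) 1 := by
    have h1 : HasDerivAt g (q * (((q - 1 : ℕ) : ℝ) * 1 ^ (q - 1 - 1)) -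
        ∑ j ∈ range q, ((3 * j : ℕ) : ℝ) * 1 ^ (3 * j - 1)) 1 :=
      ((hasDerivAt_pow (q - 1) (1 : ℝ)).const_mul _).sub
        (HasDerivAt.fun_sum fun j _ => hasDerivAt_pow (3 * j) (1 : ℝ))
    convert h1 using 1
    have h2 : (∑ j ∈ range q, (j : ℝ)) = q * (q - 1) / 2 := by
      clear * -
      induction q with
      | zero => simp
      | succ k ih => rw [Finset.sum_range_succ, ih]; push_cast; ring
    simp only [one_pow, mul_one, Nat.cast_mul, ← Finset.mul_sum, h2]
    rw [Nat.cast_sub (by omega)]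
    push_cast
    ring
  have hneg : -((q : ℝ) * (q - 1) / 2) < 0 := by
    have : (2 : ℝ) ≤ q := by exact_mod_cast hq
    nlinarith
  have ht := (hasDerivAt_iff_tendsto_slope.mp hd).eventually_lt_const hneg
  have ht2 : ∀ᶠ s in nhdsWithin (1 : ℝ) (Set.Iio 1), slope g 1 s < 0 :=
    ht.filter_mono (nhdsWithin_mono _ fun x hx => ne_of_lt hx)
  have ht3 : ∀ᶠ s in nhdsWithin (1 : ℝ) (Set.Iio 1), 0 < s :=
    (lt_mem_nhds one_pos).filter_mono nhdsWithin_le_nhds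
  obtain ⟨s, ⟨hs, hs0⟩, hs1⟩ := ((ht2.and ht3).and self_mem_nhdsWithin).exists
  have hs1' : s < 1 := hs1
  refine ⟨s, hs0, hs1'.le, ?_⟩
  rw [slope_def_field, hg1, sub_zero, div_neg_iff] at hs
  rw [Fin.sum_univ_eq_sum_range (fun j => s ^ (3 * j))]
  rcases hs with h | h
  · have : 0 < g s := h.1
    simp only [g] at this
    linarith
  · linarith [h.2]

theorem indep {α : Type*} [DecidableEq α] (R : α → α → Prop) [DecidableRel R] (d : ℕ) :
    ∀ k : ℕ, ∀ V : Finset α, V.card = k → (∀ x ∈ V, (V.filter (fun y => R x y)).card ≤ d) →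
    ∃ S ⊆ V, (∀ x ∈ S, ∀ y ∈ S, x ≠ y → ¬ R x y) ∧ V.card ≤ (2 * d + 1) * S.card := by
  intro k
  induction k using Nat.strong_induction_on with
  | _ k ih =>
  intro V hk hV
  rcases V.eq_empty_or_nonempty with rfl | hne
  · exact ⟨∅, by simp, by simp, by simp⟩
  have hsum : ∑ y ∈ V, (V.filter (fun x => R x y)).card ≤ ∑ _y ∈ V, d := by
    have := Finset.sum_card_bipartiteAbove_eq_sum_card_bipartiteBelow (s := V) (t := V) R
    simp only [bipartiteAbove, bipartiteBelow] at this
    rw [← this]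
    exact Finset.sum_le_sum hV
  obtain ⟨v, hv, hvd⟩ := Finset.exists_le_of_sum_le hne hsum
  let N := insert v (V.filter (fun y => R v y) ∪ V.filter (fun x => R x v))
  have hN : N.card ≤ 2 * d + 1 := by
    have h1 := card_insert_le v (V.filter (fun y => R v y) ∪ V.filter (fun x => R x v))
    have h2 := card_union_le (V.filter (fun y => R v y)) (V.filter (fun x => R x v))
    have h3 := hV v hv
    simp only [N]
    omega
  have hvN : v ∈ N := mem_insert_self _ _
  have hlt : (V \ N).card < k := by
    rw [← hk]
    apply card_lt_card
    rw [Finset.ssubset_iff_of_subset sdiff_subset]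
    exact ⟨v, hv, by simp [hvN]⟩
  obtain ⟨S, hSV, hS, hc⟩ := ih _ hlt (V \ N) rfl (fun x hx =>
    (card_le_card (filter_subset_filter _ sdiff_subset)).trans (hV x (mem_sdiff.mp hx).1))
  have hmem : ∀ x ∈ S, x ∈ V ∧ x ∉ N := fun x hx => mem_sdiff.mp (hSV hx)
  have hvS : v ∉ S := fun h => (hmem v h).2 hvN
  have hadj : ∀ x ∈ S, ¬ R v x ∧ ¬ R x v := by
    intro x hx
    obtain ⟨h1, h2⟩ := hmem x hx
    simp only [N, mem_insert, mem_union, mem_filter, not_or, not_and] at h2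
    exact ⟨h2.2.1 h1, h2.2.2 h1⟩
  refine ⟨insert v S, ?_, ?_, ?_⟩
  · intro x hx
    rcases mem_insert.mp hx with rfl | hx
    · exact hv
    · exact (hmem x hx).1
  · intro x hx y hy hxy
    rcases mem_insert.mp hx with rfl | hx'
    · rcases mem_insert.mp hy with rfl | hy
      · exact absurd rfl hxy
      · exact (hadj y hy).1
    · rcases mem_insert.mp hy with hyv | hy
      · rw [hyv]
        exact (hadj x (by assumption)).2
      · exact hS x (by assumption) y hy hxy
  · rw [card_insert_of_notMem hvS]
    have := card_le_card_sdiff_add_card (s := V) (t := N)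
    nlinarith

end

/-- **Theorem (almost cap sets are exponentially small).**
There exist `ε > 0` and `c_q < q` such that for every `δ > 0` and all sufficiently
large `n`: every `A ⊆ F_q^n` that is an `(ε,δ)`-cap set for some admissible tuple
`(a, b, c)` (i.e. there is `A' ⊆ A` with `|A'| > δ|A|` such that every `x ∈ A'` has
fewer than `|A|^ε` pairs `(y,z) ∈ A²` with `ax + by + cz = 0`) satisfies
`|A| ≤ c_q^n`. -/
theorem almost_cap_set_bound {F : Type*} [Field F] [Fintype F] :
    ∃ ε : ℝ, 0 < ε ∧ ∃ cq : ℝ, cq < (Fintype.card F : ℝ) ∧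
      ∀ δ : ℝ, 0 < δ → ∃ N : ℕ, ∀ n : ℕ, N ≤ n →
        ∀ A : Set (Fin n → F),
        (∃ a b c : F, a ≠ 0 ∧ b ≠ 0 ∧ c ≠ 0 ∧ a + b + c = 0 ∧
          ∃ A' : Set (Fin n → F), A' ⊆ A ∧ δ * (A.ncard : ℝ) < (A'.ncard : ℝ) ∧
            ∀ x ∈ A',
              (({p : (Fin n → F) × (Fin n → F) | p.1 ∈ A ∧ p.2 ∈ A ∧
                a • x + b • p.1 + c • p.2 = 0}).ncard : ℝ) < (A.ncard : ℝ) ^ ε) →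
        (A.ncard : ℝ) ≤ cq ^ n := by
  classical
  have hq : 2 ≤ Fintype.card F := Fintype.one_lt_card
  obtain ⟨s, hs0, hs1, hs⟩ := exists_s (Fintype.card F) hq
  have hM := fun n => lowExp_card (Fintype.card F) n s hs0 hs1
  set C : ℝ := (∑ j : Fin (Fintype.card F), s ^ (3 * (j : ℕ))) / s ^ (Fintype.card F - 1) with hC
  have hCq : C < Fintype.card F := by rw [hC, div_lt_iff₀ (by positivity)]; exact hs
  have hC0 : 0 < C := by
    have : Nonempty (Fin (Fintype.card F)) := ⟨⟨0, by omega⟩⟩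
    exact div_pos (Finset.sum_pos (fun j _ => by positivity) Finset.univ_nonempty) (by positivity)
  clear_value C
  set q : ℝ := (Fintype.card F : ℝ) with hqdef
  have hq2 : (2 : ℝ) ≤ q := by rw [hqdef]; exact_mod_cast hq
  obtain ⟨r, hCr, hrq⟩ := exists_between hCq
  obtain ⟨cq, hrc, hcq⟩ := exists_between hrq
  have hr0 : 0 < r := hC0.trans hCr
  have hlogq : 0 < Real.log q := Real.log_pos (by linarith)
  have hlog : 0 < Real.log (r / C) := Real.log_pos (by rwa [one_lt_div hC0])
  refine ⟨Real.log (r / C) / Real.log q, by positivity, cq, hcq, fun δ hδ => ?_⟩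
  have hqε : q ^ (Real.log (r / C) / Real.log q) = r / C := by
    rw [Real.rpow_def_of_pos (by linarith), mul_div_cancel₀ _ hlogq.ne', Real.exp_log (by positivity)]
  have hε : 0 < Real.log (r / C) / Real.log q := by positivity
  set ε : ℝ := Real.log (r / C) / Real.log q
  obtain ⟨N, hN⟩ := Filter.eventually_atTop.mp
    ((tendsto_pow_atTop_atTop_of_one_lt ((one_lt_div hr0).mpr hrc)).eventually_ge_atTop (9 / δ))
  refine ⟨N, fun n hn A => ?_⟩
  rintro ⟨a, b, c, ha, hb, hc, habc, A', hA'A, hδA, hx⟩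
  have hNn := hN n hn
  rw [div_pow, div_le_div_iff₀ hδ (by positivity)] at hNn
  -- A nonempty
  have hA0 : 0 < A.ncard := by
    rcases Nat.eq_zero_or_pos A.ncard with h | h
    · have := Set.ncard_le_ncard hA'A A.toFinite
      have h' : A'.ncard = 0 := by omega
      simp [h, h'] at hδA
    · exact h
  have hA1 : (1 : ℝ) ≤ A.ncard := by exact_mod_cast hA0
  have hAq : (A.ncard : ℝ) ≤ q ^ n := by
    have := Set.ncard_le_ncard (Set.subset_univ A) Set.finite_univ
    rw [Set.ncard_univ, Nat.card_eq_fintype_card, Fintype.card_fun, Fintype.card_fin] at this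
    rw [hqdef]
    exact_mod_cast this
  have hAε : (A.ncard : ℝ) ^ ε ≤ (r / C) ^ n := by
    calc (A.ncard : ℝ) ^ ε ≤ (q ^ n) ^ ε := Real.rpow_le_rpow (by positivity) hAq hε.le
      _ = (r / C) ^ n := by
        rw [← hqε, ← Real.rpow_natCast, ← Real.rpow_natCast, ← Real.rpow_mul (by linarith),
          ← Real.rpow_mul (by linarith), mul_comm]
  have hAε1 : 1 ≤ (A.ncard : ℝ) ^ ε := Real.one_le_rpow hA1 hε.le
  let V : Finset (Fin n → F) := A'.toFinset
  let d : ℕ := ⌊(A.ncard : ℝ) ^ ε⌋₊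
  let R : (Fin n → F) → (Fin n → F) → Prop := fun x y => ∃ z ∈ A', a • x + b • y + c • z = 0
  obtain ⟨S, hSV, hS, hcard⟩ := indep R d V.card V rfl (by
    intro x hxV
    have hxA' : x ∈ A' := by simpa [V] using hxV
    have h1 := (hx x hxA').le
    have h2 := Nat.le_floor h1
    refine le_trans ?_ h2
    rw [← Set.ncard_coe_finset]
    refine le_trans (Set.ncard_le_ncard ?_ (Set.toFinite _)) (Set.ncard_image_le (f := Prod.fst) (Set.toFinite _))
    intro y hy
    simp only [Finset.coe_filter, Set.mem_ofPred_eq, V, Set.mem_toFinset] at hy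
    obtain ⟨hy, z, hz, hxyz⟩ := hy
    exact ⟨(y, z), ⟨hA'A hy, hA'A hz, hxyz⟩, rfl⟩)
  have hSA : ∀ x ∈ S, x ∈ A' := fun x hx => by simpa [V] using hSV hx
  have hb' := cap_bound a b c S (by
    intro x hx y hy z hz
    constructor
    · intro h
      have hxy : x = y := by
        by_contra hne
        exact hS x hx y hy hne ⟨z, hSA z hz, h⟩
      refine ⟨hxy, ?_⟩
      subst hxy
      have hab : a + b = -c := by linear_combination habc
      rw [← add_smul, hab, neg_smul, neg_add_eq_zero] at h
      exact smul_right_injective _ hc h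
    · rintro ⟨rfl, rfl⟩
      rw [← add_smul, ← add_smul, habc, zero_smul])
  have hVc : (A'.ncard : ℝ) = V.card := by
    rw [Set.ncard_eq_toFinset_card']
  have hd : (d : ℝ) ≤ (A.ncard : ℝ) ^ ε := Nat.floor_le (by positivity)
  have h1 : (V.card : ℝ) ≤ (2 * d + 1) * S.card := by exact_mod_cast hcard
  have h2 : (S.card : ℝ) ≤ 3 * (lowExp (Fintype.card F) n).card := by exact_mod_cast hb'
  have h3 : (S.card : ℝ) ≤ 3 * C ^ n := h2.trans (by linarith [hM n])
  have h4 : (V.card : ℝ) ≤ (3 * (r / C) ^ n) * (3 * C ^ n) :=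
    h1.trans (mul_le_mul (by linarith) h3 (by positivity) (by positivity))
  have h5 : (3 * (r / C) ^ n) * (3 * C ^ n) = 9 * r ^ n := by
    rw [div_pow]
    field_simp
    norm_num
  have h6 : δ * A.ncard ≤ δ * cq ^ n := by
    rw [hVc] at hδA
    linarith
  exact le_of_mul_le_mul_left h6 hδ
end
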